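/- Let 1 ≤ K' ≤ K, let δ ≥ 0, and let M, C_1, …, C_K, Z_1, …, Z_K be finite discrete random variables with C = (C_1, …, C_K). Suppose that for each k ∈ {1, …, K'}, the triple (Z_1, …, Z_{k−1}, C) → (C_k, M) → Z_k forms a Markov chain, and that the per-frame leakages satisfy I(M; Z_k | C_k) ≤ δ for every k ∈ {1, …, K'}. Then the cumulative leakage up to frame K' satisfies I(M; Z_1, …, Z_{K'} | C) ≤ K'·δ. -/

import Mathlib

open scoped Classical

/-- Probability of an event under pmf `p` on a finite sample space. -/
noncomputable def pr {Ω : Type*} [Fintype Ω] (p : Ω → ℝ) (E : Ω → Prop) : ℝ :=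
  ∑ ω, if E ω then p ω else 0

/-- Shannon entropy of a finite discrete random variable `X`. -/
noncomputable def entropy {Ω α : Type*} [Fintype Ω] [Fintype α] (p : Ω → ℝ) (X : Ω → α) : ℝ :=
  -∑ x, pr p (fun ω => X ω = x) * Real.log (pr p (fun ω => X ω = x))

/-- Conditional entropy `H(X|Y) = H(X,Y) - H(Y)`. -/
noncomputable def condEntropy {Ω α β : Type*} [Fintype Ω] [Fintype α] [Fintype β]
    (p : Ω → ℝ) (X : Ω → α) (Y : Ω → β) : ℝ :=
  entropy p (fun ω => (X ω, Y ω)) - entropy p Y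

/-- Mutual information `I(X;Y) = H(X) + H(Y) - H(X,Y)`. -/
noncomputable def mutualInfo {Ω α β : Type*} [Fintype Ω] [Fintype α] [Fintype β]
    (p : Ω → ℝ) (X : Ω → α) (Y : Ω → β) : ℝ :=
  entropy p X + entropy p Y - entropy p (fun ω => (X ω, Y ω))

/-- Conditional mutual information `I(X;Y|Z) = H(X,Z) + H(Y,Z) - H(X,Y,Z) - H(Z)`. -/
noncomputable def condMutualInfo {Ω α β γ : Type*} [Fintype Ω] [Fintype α] [Fintype β] [Fintype γ]
    (p : Ω → ℝ) (X : Ω → α) (Y : Ω → β) (Z : Ω → γ) : ℝ :=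
  entropy p (fun ω => (X ω, Z ω)) + entropy p (fun ω => (Y ω, Z ω))
    - entropy p (fun ω => (X ω, Y ω, Z ω)) - entropy p Z

/-- `A → D → B` Markov chain: `A` and `B` are conditionally independent given `D`. -/
def CondIndep {Ω α β δ : Type*} [Fintype Ω]
    (p : Ω → ℝ) (A : Ω → α) (B : Ω → β) (D : Ω → δ) : Prop :=
  ∀ (a : α) (b : β) (d : δ),
    pr p (fun ω => A ω = a ∧ B ω = b ∧ D ω = d) * pr p (fun ω => D ω = d)
      = pr p (fun ω => A ω = a ∧ D ω = d) * pr p (fun ω => B ω = b ∧ D ω = d)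

/-! `I(M; Z₁, …, Zₙ | C)` splits by the chain rule into the terms `I(M; Zₖ | Z₁, …, Zₖ₋₁, C)`.
Write `A = (Z₁, …, Zₖ₋₁, C)`, which determines `Cₖ`. Expanding `I(Zₖ; A, M | Cₖ)` by the chain
rule in both orders gives

`I(Zₖ; A | Cₖ) + I(Zₖ; M | A) = I(Zₖ; M | Cₖ) + I(Zₖ; A | Cₖ, M)`,

where the first term is nonnegative and the last one vanishes because `A → (Cₖ, M) → Zₖ`. Hence the
`k`-th term of the chain rule is at most `I(M; Zₖ | Cₖ)`. -/

section Leakage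

variable {Ω α β γ : Type*} [Fintype Ω] {p : Ω → ℝ}

lemma pr_nonneg (hp : ∀ ω, 0 ≤ p ω) (E : Ω → Prop) : 0 ≤ pr p E :=
  Finset.sum_nonneg fun ω _ => ite_nonneg (hp ω) le_rfl

lemma pr_pos (hp : ∀ ω, 0 ≤ p ω) {E : Ω → Prop} {ω : Ω} (hω : 0 < p ω) (hE : E ω) :
    0 < pr p E :=
  Finset.sum_pos' (fun ω _ => ite_nonneg (hp ω) le_rfl)
    ⟨ω, Finset.mem_univ ω, by rwa [if_pos hE]⟩

lemma sum_pr_eq_and [Fintype α] (p : Ω → ℝ) (X : Ω → α) (E : Ω → Prop) :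
    ∑ x, pr p (fun ω => X ω = x ∧ E ω) = pr p E := by
  simp only [pr]
  rw [Finset.sum_comm]
  refine Finset.sum_congr rfl fun ω _ => ?_
  by_cases hω : E ω <;> simp [hω]

lemma sum_pr_eq_mul [Fintype α] (p : Ω → ℝ) (X : Ω → α) (f : α → ℝ) :
    ∑ x, pr p (fun ω => X ω = x) * f x = ∑ ω, p ω * f (X ω) := by
  simp only [pr, Finset.sum_mul]
  rw [Finset.sum_comm]
  simp [ite_mul]

lemma sum_pr_eq [Fintype α] (p : Ω → ℝ) (X : Ω → α) :
    ∑ x, pr p (fun ω => X ω = x) = ∑ ω, p ω := by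
  simpa using sum_pr_eq_mul p X fun _ => 1

lemma entropy_eq_neg_sum_mul_log [Fintype α] (p : Ω → ℝ) (X : Ω → α) :
    entropy p X = -∑ ω, p ω * Real.log (pr p fun ω' => X ω' = X ω) := by
  rw [entropy, sum_pr_eq_mul p X fun x => Real.log (pr p fun ω' => X ω' = x)]

lemma entropy_congr [Fintype α] [Fintype β] (p : Ω → ℝ) {X : Ω → α} {Y : Ω → β}
    (h : ∀ ω ω', X ω = X ω' ↔ Y ω = Y ω') : entropy p X = entropy p Y := by
  simp only [entropy_eq_neg_sum_mul_log, h]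

/-- Gibbs' inequality, from `log t ≤ t - 1` at `t = q (X ω) / P[X = X ω]`. -/
lemma entropy_le_neg_sum_mul_log [Fintype α] (hp : ∀ ω, 0 ≤ p ω) (X : Ω → α) {q : α → ℝ}
    (hq : ∀ x, 0 ≤ q x) (hq_pos : ∀ ω, 0 < p ω → 0 < q (X ω)) (hq_sum : ∑ x, q x ≤ ∑ ω, p ω) :
    entropy p X ≤ -∑ ω, p ω * Real.log (q (X ω)) := by
  set P : α → ℝ := fun x => pr p fun ω => X ω = x
  have log_ratio_le : ∀ ω, p ω * (Real.log (q (X ω)) - Real.log (P (X ω)))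
      ≤ p ω * (q (X ω) / P (X ω) - 1) := by
    intro ω
    rcases (hp ω).eq_or_lt with hω | hω
    · simp [← hω]
    have hP : 0 < P (X ω) := pr_pos hp hω rfl
    rw [← Real.log_div (hq_pos ω hω).ne' hP.ne']
    exact mul_le_mul_of_nonneg_left
      (Real.log_le_sub_one_of_pos (div_pos (hq_pos ω hω) hP)) hω.le
  have sum_ratio_le : ∑ ω, p ω * (q (X ω) / P (X ω)) ≤ ∑ ω, p ω :=
    calc ∑ ω, p ω * (q (X ω) / P (X ω)) = ∑ x, P x * (q x / P x) :=
          (sum_pr_eq_mul p X fun x => q x / P x).symm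
      _ ≤ ∑ x, q x := Finset.sum_le_sum fun x _ => by
          rcases eq_or_ne (P x) 0 with hP | hP
          · simpa [hP] using hq x
          · exact (mul_div_cancel₀ _ hP).le
      _ ≤ ∑ ω, p ω := hq_sum
  have sum_log_ratio_le := Finset.sum_le_sum fun ω (_ : ω ∈ Finset.univ) => log_ratio_le ω
  simp only [mul_sub, mul_one, Finset.sum_sub_distrib] at sum_log_ratio_le
  rw [entropy_eq_neg_sum_mul_log]
  linarith

/-- The law `P[A = a, D = d] P[B = b, D = d] / P[D = d]` that `(A, B, D)` would have if `A` and `B`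
were conditionally independent given `D`, with their actual joint laws with `D`. It is `0` where
`P[D = d] = 0`. -/
noncomputable def condProdLaw (p : Ω → ℝ) (A : Ω → α) (B : Ω → β) (D : Ω → γ) (x : α × β × γ) : ℝ :=
  pr p (fun ω => A ω = x.1 ∧ D ω = x.2.2) * pr p (fun ω => B ω = x.2.1 ∧ D ω = x.2.2)
    / pr p (fun ω => D ω = x.2.2)

lemma condProdLaw_nonneg (hp : ∀ ω, 0 ≤ p ω) (A : Ω → α) (B : Ω → β) (D : Ω → γ)
    (x : α × β × γ) : 0 ≤ condProdLaw p A B D x :=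
  div_nonneg (mul_nonneg (pr_nonneg hp _) (pr_nonneg hp _)) (pr_nonneg hp _)

lemma condProdLaw_pos (hp : ∀ ω, 0 ≤ p ω) (A : Ω → α) (B : Ω → β) (D : Ω → γ)
    {ω : Ω} (hω : 0 < p ω) : 0 < condProdLaw p A B D (A ω, B ω, D ω) :=
  div_pos (mul_pos (pr_pos hp hω ⟨rfl, rfl⟩) (pr_pos hp hω ⟨rfl, rfl⟩)) (pr_pos hp hω rfl)

lemma log_condProdLaw (hp : ∀ ω, 0 ≤ p ω) (A : Ω → α) (B : Ω → β) (D : Ω → γ)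
    {ω : Ω} (hω : 0 < p ω) :
    Real.log (condProdLaw p A B D (A ω, B ω, D ω)) =
      Real.log (pr p fun ω' => A ω' = A ω ∧ D ω' = D ω)
        + Real.log (pr p fun ω' => B ω' = B ω ∧ D ω' = D ω)
        - Real.log (pr p fun ω' => D ω' = D ω) := by
  have hAD : 0 < pr p fun ω' => A ω' = A ω ∧ D ω' = D ω := pr_pos hp hω ⟨rfl, rfl⟩
  have hBD : 0 < pr p fun ω' => B ω' = B ω ∧ D ω' = D ω := pr_pos hp hω ⟨rfl, rfl⟩
  have hD : 0 < pr p fun ω' => D ω' = D ω := pr_pos hp hω rfl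
  rw [condProdLaw, Real.log_div (mul_pos hAD hBD).ne' hD.ne', Real.log_mul hAD.ne' hBD.ne']

lemma condProdLaw_eq_of_condIndep (hp : ∀ ω, 0 ≤ p ω) {A : Ω → α} {B : Ω → β} {D : Ω → γ}
    (h : CondIndep p A B D) {ω : Ω} (hω : 0 < p ω) :
    condProdLaw p A B D (A ω, B ω, D ω) =
      pr p fun ω' => (A ω', B ω', D ω') = (A ω, B ω, D ω) := by
  have hD : 0 < pr p fun ω' => D ω' = D ω := pr_pos hp hω rfl
  simp only [Prod.mk.injEq]
  exact (eq_div_of_mul_eq hD.ne' (h (A ω) (B ω) (D ω))).symm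

variable [Fintype α] [Fintype β] [Fintype γ]

lemma sum_condProdLaw (p : Ω → ℝ) (A : Ω → α) (B : Ω → β) (D : Ω → γ) :
    ∑ x, condProdLaw p A B D x = ∑ ω, p ω :=
  calc ∑ x, condProdLaw p A B D x
      = ∑ d, ∑ b, ∑ a, condProdLaw p A B D (a, b, d) := by
        simp only [Fintype.sum_prod_type_right]
    _ = ∑ d, pr p (fun ω => D ω = d) * pr p (fun ω => D ω = d) / pr p (fun ω => D ω = d) := by
        simp only [condProdLaw, ← Finset.sum_div, ← Finset.mul_sum, ← Finset.sum_mul,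
          sum_pr_eq_and]
    _ = ∑ ω, p ω := by simp only [mul_self_div_self, sum_pr_eq]

lemma condMutualInfo_eq_neg_sum_sub_entropy (hp : ∀ ω, 0 ≤ p ω)
    (A : Ω → α) (B : Ω → β) (D : Ω → γ) :
    condMutualInfo p A B D =
      -∑ ω, p ω * Real.log (condProdLaw p A B D (A ω, B ω, D ω))
        - entropy p fun ω => (A ω, B ω, D ω) := by
  have log_expand : ∀ ω, p ω * Real.log (condProdLaw p A B D (A ω, B ω, D ω)) =
      p ω * Real.log (pr p fun ω' => A ω' = A ω ∧ D ω' = D ω)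
        + p ω * Real.log (pr p fun ω' => B ω' = B ω ∧ D ω' = D ω)
        - p ω * Real.log (pr p fun ω' => D ω' = D ω) := by
    intro ω
    rcases (hp ω).eq_or_lt with hω | hω
    · simp [← hω]
    · rw [log_condProdLaw hp A B D hω]
      ring
  simp only [log_expand, condMutualInfo, entropy_eq_neg_sum_mul_log, Prod.mk.injEq,
    Finset.sum_add_distrib, Finset.sum_sub_distrib]
  ring

lemma condMutualInfo_nonneg (hp : ∀ ω, 0 ≤ p ω) (A : Ω → α) (B : Ω → β) (D : Ω → γ) :
    0 ≤ condMutualInfo p A B D := by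
  rw [condMutualInfo_eq_neg_sum_sub_entropy hp, sub_nonneg]
  exact entropy_le_neg_sum_mul_log hp _ (condProdLaw_nonneg hp A B D)
    (fun _ => condProdLaw_pos hp A B D) (sum_condProdLaw p A B D).le

lemma condMutualInfo_eq_zero_of_condIndep (hp : ∀ ω, 0 ≤ p ω) {A : Ω → α} {B : Ω → β} {D : Ω → γ}
    (h : CondIndep p A B D) : condMutualInfo p A B D = 0 := by
  rw [condMutualInfo_eq_neg_sum_sub_entropy hp, entropy_eq_neg_sum_mul_log, sub_eq_zero, neg_inj]
  refine Finset.sum_congr rfl fun ω _ => ?_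
  rcases (hp ω).eq_or_lt with hω | hω
  · simp [← hω]
  · rw [condProdLaw_eq_of_condIndep hp h hω]

lemma condMutualInfo_comm (p : Ω → ℝ) (A : Ω → α) (B : Ω → β) (D : Ω → γ) :
    condMutualInfo p A B D = condMutualInfo p B A D := by
  have entropy_swap : entropy p (fun ω => (A ω, B ω, D ω)) = entropy p fun ω => (B ω, A ω, D ω) :=
    entropy_congr p fun _ _ => by simp only [Prod.mk.injEq, and_left_comm]
  simp only [condMutualInfo, entropy_swap]
  ring

lemma condMutualInfo_congr_right {β' : Type*} [Fintype β'] (p : Ω → ℝ) (A : Ω → α) {B : Ω → β}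
    {B' : Ω → β'} (D : Ω → γ) (h : ∀ ω ω', B ω = B ω' ↔ B' ω = B' ω') :
    condMutualInfo p A B D = condMutualInfo p A B' D := by
  have entropy_pair : entropy p (fun ω => (B ω, D ω)) = entropy p fun ω => (B' ω, D ω) :=
    entropy_congr p fun _ _ => by simp only [Prod.mk.injEq, h]
  have entropy_triple :
      entropy p (fun ω => (A ω, B ω, D ω)) = entropy p fun ω => (A ω, B' ω, D ω) :=
    entropy_congr p fun _ _ => by simp only [Prod.mk.injEq, h]
  rw [condMutualInfo, condMutualInfo, entropy_pair, entropy_triple]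

lemma condMutualInfo_congr_cond {γ' : Type*} [Fintype γ'] (p : Ω → ℝ) (A : Ω → α) (B : Ω → β)
    {D : Ω → γ} {D' : Ω → γ'} (h : ∀ ω ω', D ω = D ω' ↔ D' ω = D' ω') :
    condMutualInfo p A B D = condMutualInfo p A B D' := by
  have entropy_left : entropy p (fun ω => (A ω, D ω)) = entropy p fun ω => (A ω, D' ω) :=
    entropy_congr p fun _ _ => by simp only [Prod.mk.injEq, h]
  have entropy_right : entropy p (fun ω => (B ω, D ω)) = entropy p fun ω => (B ω, D' ω) :=
    entropy_congr p fun _ _ => by simp only [Prod.mk.injEq, h]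
  have entropy_triple :
      entropy p (fun ω => (A ω, B ω, D ω)) = entropy p fun ω => (A ω, B ω, D' ω) :=
    entropy_congr p fun _ _ => by simp only [Prod.mk.injEq, h]
  rw [condMutualInfo, condMutualInfo, entropy_left, entropy_right, entropy_triple,
    entropy_congr p h]

lemma condMutualInfo_of_subsingleton_right [Subsingleton β] (p : Ω → ℝ) (A : Ω → α) (B : Ω → β)
    (D : Ω → γ) : condMutualInfo p A B D = 0 := by
  have entropy_pair : entropy p (fun ω => (B ω, D ω)) = entropy p D :=
    entropy_congr p fun ω ω' => by simp [Subsingleton.elim (B ω) (B ω')]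
  have entropy_triple : entropy p (fun ω => (A ω, B ω, D ω)) = entropy p fun ω => (A ω, D ω) :=
    entropy_congr p fun ω ω' => by simp [Subsingleton.elim (B ω) (B ω')]
  rw [condMutualInfo, entropy_pair, entropy_triple]
  ring

lemma condMutualInfo_prod_right {β' : Type*} [Fintype β'] (p : Ω → ℝ) (A : Ω → α) (B : Ω → β)
    (B' : Ω → β') (D : Ω → γ) :
    condMutualInfo p A (fun ω => (B ω, B' ω)) D =
      condMutualInfo p A B D + condMutualInfo p A B' fun ω => (B ω, D ω) := by
  have entropy_triple :
      entropy p (fun ω => ((B ω, B' ω), D ω)) = entropy p fun ω => (B' ω, B ω, D ω) :=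
    entropy_congr p fun _ _ => by simp only [Prod.mk.injEq, and_assoc, and_left_comm]
  have entropy_quadruple :
      entropy p (fun ω => (A ω, (B ω, B' ω), D ω)) = entropy p fun ω => (A ω, B' ω, B ω, D ω) :=
    entropy_congr p fun _ _ => by simp only [Prod.mk.injEq, and_assoc, and_left_comm]
  simp only [condMutualInfo, entropy_triple, entropy_quadruple]
  ring

lemma condMutualInfo_le_of_condIndep {δ : Type*} [Fintype δ] (hp : ∀ ω, 0 ≤ p ω) {M : Ω → α}
    {Z : Ω → β} {A : Ω → γ} {D : Ω → δ} (hD : D.FactorsThrough A)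
    (h : CondIndep p A Z fun ω => (D ω, M ω)) :
    condMutualInfo p M Z A ≤ condMutualInfo p M Z D := by
  have markov : condMutualInfo p Z A (fun ω => (M ω, D ω)) = 0 := by
    rw [condMutualInfo_comm, ← condMutualInfo_eq_zero_of_condIndep hp h]
    exact condMutualInfo_congr_cond p A Z fun _ _ => by simp only [Prod.mk.injEq, and_comm]
  calc condMutualInfo p M Z A = condMutualInfo p Z M fun ω => (A ω, D ω) := by
        rw [condMutualInfo_comm]
        exact condMutualInfo_congr_cond p Z M fun _ _ => by
          simpa only [Prod.mk.injEq, iff_self_and] using @hD _ _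
    _ ≤ condMutualInfo p Z A D + condMutualInfo p Z M fun ω => (A ω, D ω) :=
        le_add_of_nonneg_left (condMutualInfo_nonneg hp Z A D)
    _ = condMutualInfo p Z (fun ω => (A ω, M ω)) D := (condMutualInfo_prod_right p Z A M D).symm
    _ = condMutualInfo p Z (fun ω => (M ω, A ω)) D :=
        condMutualInfo_congr_right p Z D fun _ _ => by simp only [Prod.mk.injEq, and_comm]
    _ = condMutualInfo p M Z D := by
        rw [condMutualInfo_prod_right, markov, add_zero, condMutualInfo_comm]

lemma condMutualInfo_pi_succ {n : ℕ} {ζ : Fin (n + 1) → Type*} [∀ k, Fintype (ζ k)]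
    (p : Ω → ℝ) (M : Ω → α) (Z : ∀ k, Ω → ζ k) (C : Ω → γ) :
    condMutualInfo p M (fun ω k => Z k ω) C =
      condMutualInfo p M (fun ω (k : Fin n) => Z k.castSucc ω) C
        + condMutualInfo p M (Z (Fin.last n)) fun ω => (fun k : Fin n => Z k.castSucc ω, C ω) := by
  rw [← condMutualInfo_prod_right]
  exact condMutualInfo_congr_right p M C fun _ _ => by
    simp only [funext_iff, Fin.forall_fin_succ', Prod.mk.injEq]

theorem cumulative_leakage_bound_general {n : ℕ} {ζ κ : Fin n → Type*} [∀ k, Fintype (ζ k)]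
    [∀ k, Fintype (κ k)] (hp : ∀ ω, 0 ≤ p ω) (M : Ω → α) (C : Ω → γ) (Y : ∀ k, Ω → κ k)
    (Z : ∀ k, Ω → ζ k) (hY : ∀ k, (Y k).FactorsThrough C)
    (hMarkov : ∀ k : Fin n,
      CondIndep p (fun ω => (fun i : Fin k => Z ⟨i, i.isLt.trans k.isLt⟩ ω, C ω)) (Z k)
        fun ω => (Y k ω, M ω)) :
    condMutualInfo p M (fun ω k => Z k ω) C
      ≤ ∑ k, condMutualInfo p M (Z k) (Y k) := by
  induction n with
  | zero => simp [condMutualInfo_of_subsingleton_right]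
  | succ n ih =>
    rw [condMutualInfo_pi_succ, Fin.sum_univ_castSucc]
    exact add_le_add
      (ih _ _ (fun k => hY k.castSucc) fun k => hMarkov k.castSucc)
      (condMutualInfo_le_of_condIndep hp
        (fun _ _ h => hY (Fin.last n) (congrArg Prod.snd h)) (hMarkov (Fin.last n)))

end Leakage

/-- Lemma 4 of the paper: if for each frame `k ≤ K'` the Markov chain
`(Z₁,…,Z_{k-1}, C) → (C_k, M) → Z_k` holds and each per-frame leakage is at most `δ`,
then the cumulative leakage up to frame `K'` is at most `K' · δ`. -/
theorem cumulative_leakage_bound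
    {Ω 𝕄 γ ζ : Type*} [Fintype Ω] [Fintype 𝕄] [Fintype γ] [Fintype ζ]
    (p : Ω → ℝ) (hp : ∀ ω, 0 ≤ p ω) (hp1 : ∑ ω, p ω = 1)
    (K K' : ℕ) (hK' : 1 ≤ K') (hK'K : K' ≤ K) (δ : ℝ) (hδ : 0 ≤ δ)
    (M : Ω → 𝕄) (C : Fin K → Ω → γ) (Z : Fin K → Ω → ζ)
    (hMarkov : ∀ k : Fin K, (k : ℕ) < K' →
      CondIndep p
        (fun ω => ((fun i : Fin (k : ℕ) => Z ⟨i, lt_trans i.isLt k.isLt⟩ ω),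
                   (fun i : Fin K => C i ω)))
        (Z k)
        (fun ω => (C k ω, M ω)))
    (hLeak : ∀ k : Fin K, (k : ℕ) < K' →
      condMutualInfo p M (Z k) (C k) ≤ δ) :
    condMutualInfo p M
        (fun ω => fun i : Fin K' => Z (Fin.castLE hK'K i) ω)
        (fun ω => fun i : Fin K => C i ω)
      ≤ (K' : ℝ) * δ := by
  calc _ ≤ ∑ k : Fin K', condMutualInfo p M (Z (Fin.castLE hK'K k)) (C (Fin.castLE hK'K k)) :=
        cumulative_leakage_bound_general hp M _ _ _
          (fun _ _ _ h => congrFun h _) fun k => hMarkov (Fin.castLE hK'K k) k.isLt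
    _ ≤ ∑ _k : Fin K', δ := Finset.sum_le_sum fun k _ => hLeak (Fin.castLE hK'K k) k.isLt
    _ = K' * δ := by simp
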